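/- Let x > 0 be real with x not an integer. Then ∑_{n=1}^∞ σ_{1/2}(n) n^{−1/2} e^{−2π√(2nx)} cos(2π√(2nx)) = ( 1/(2π√(2x)) − 1/2 )·ζ(1/2) + π√(2x)·ζ(−1/2) + (x^{3/2}/(π√2)) ∑_{n=1}^∞ σ_{1/2}(n)/(√n·(x² + n²)). -/

import Mathlib

open Complex Finset
open scoped Real BigOperators Classical

/-- Generalized divisor sum `σ_r(n) = ∑_{d ∣ n} d^r` with real exponent. -/
noncomputable def rsigma (r : ℝ) (n : ℕ) : ℝ := ∑ d ∈ n.divisors, (d : ℝ) ^ r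

/-! Put `φ(u) = e^{-u} cos u`. Since `σ_{1/2}(n) n^{-1/2} = σ_{-1/2}(n)`, the left-hand side is
`∑_k k^{-1/2} ∑_j φ(2π√(2kjx))`. As a function of `t`, `φ(c√|t|)` is, up to scaling, the real
part of the Fourier transform of a Lévy density `h_A(y) = e^{-A/y} y^{-3/2}` on `y > 0`, so
Poisson summation turns the `k`-th term into a multiple of `∑_m h_{2πkx}(m)` minus half of
`k^{-1/2}`. The sum over `k` is now geometric and produces the Planck function
`1/(e^{2πx/m} - 1)`. Its pole `m/(2πx)` and the sum of the `k^{-1/2}` diverge at the same rate, and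
each leaves a multiple of `ζ(1/2)` behind. The partial fraction expansion of `coth` applied to the
rest gives `ζ(3/2)`, which is a multiple of `ζ(-1/2)`, and a series in `1/(x² + (mj)²)` that
regroups into the right-hand sum over divisors. -/

theorem rsigma_neg (r : ℝ) (n : ℕ) : rsigma (-r) n = rsigma r n / (n : ℝ) ^ r := by
  rw [rsigma, rsigma, Finset.sum_div, ← Nat.sum_div_divisors]
  refine Finset.sum_congr rfl fun d hd => ?_
  have hd_pos : (0 : ℝ) < d := by exact_mod_cast Nat.pos_of_mem_divisors hd
  rw [Nat.cast_div (Nat.dvd_of_mem_divisors hd) hd_pos.ne', Real.rpow_neg (by positivity),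
    Real.div_rpow (by positivity) hd_pos.le, inv_div]

theorem sum_divisorsAntidiagonal_rpow_mul (r : ℝ) (φ : ℕ → ℝ) (n : ℕ) :
    ∑ p ∈ n.divisorsAntidiagonal, (p.1 : ℝ) ^ r * φ (p.1 * p.2) = rsigma r n * φ n := by
  rw [Nat.sum_divisorsAntidiagonal (fun a b => (a : ℝ) ^ r * φ (a * b)), rsigma, Finset.sum_mul]
  refine Finset.sum_congr rfl fun d hd => ?_
  rw [Nat.mul_div_cancel' (Nat.dvd_of_mem_divisors hd)]

section DivisorResummation

variable {r p C : ℝ} {φ : ℕ → ℝ}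

theorem summable_pnat_rpow {s : ℝ} (hs : s < -1) : Summable fun n : ℕ+ => ((n : ℕ) : ℝ) ^ s :=
  (Real.summable_nat_rpow.2 hs).comp_injective PNat.coe_injective

theorem summable_rpow_mul_apply_mul (hp : 1 < p) (hrp : r + 1 < p)
    (hφ : ∀ n : ℕ, 0 < n → |φ n| ≤ C * (n : ℝ) ^ (-p)) :
    Summable fun q : ℕ+ × ℕ+ => ((q.1 : ℕ) : ℝ) ^ r * φ (q.1 * q.2) := by
  have h_majorant := ((summable_pnat_rpow (s := r - p) (by linarith)).mul_of_nonneg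
    (summable_pnat_rpow (s := -p) (by linarith)) (fun _ => by positivity)
    (fun _ => by positivity)).mul_left C
  refine Summable.of_norm_bounded h_majorant fun q => ?_
  have hq : (0 : ℝ) < (q.1 : ℕ) := by exact_mod_cast q.1.pos
  calc ‖((q.1 : ℕ) : ℝ) ^ r * φ (q.1 * q.2)‖
      = ((q.1 : ℕ) : ℝ) ^ r * |φ (q.1 * q.2)| := by
        rw [norm_mul, Real.norm_eq_abs, Real.norm_eq_abs, abs_of_nonneg (by positivity)]
    _ ≤ ((q.1 : ℕ) : ℝ) ^ r * (C * ((q.1 * q.2 : ℕ) : ℝ) ^ (-p)) := by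
        gcongr
        exact hφ _ (Nat.mul_pos q.1.pos q.2.pos)
    _ = C * (((q.1 : ℕ) : ℝ) ^ (r - p) * ((q.2 : ℕ) : ℝ) ^ (-p)) := by
        rw [Nat.cast_mul, Real.mul_rpow (by positivity) (by positivity), sub_eq_add_neg,
          Real.rpow_add hq]
        ring

theorem hasSum_rsigma_mul (hp : 1 < p) (hrp : r + 1 < p)
    (hφ : ∀ n : ℕ, 0 < n → |φ n| ≤ C * (n : ℝ) ^ (-p)) :
    HasSum (fun n : ℕ => rsigma r (n + 1) * φ (n + 1))
      (∑' q : ℕ+ × ℕ+, ((q.1 : ℕ) : ℝ) ^ r * φ (q.1 * q.2)) := by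
  have h_sigma := (Equiv.hasSum_iff sigmaAntidiagonalEquivProd).2
    (summable_rpow_mul_apply_mul hp hrp hφ).hasSum
  refine (hasSum_pnat_iff_hasSum_succ (f := fun n => rsigma r n * φ n)).1
    (h_sigma.sigma fun n => ?_)
  rw [← sum_divisorsAntidiagonal_rpow_mul, ← Finset.sum_attach]
  exact hasSum_fintype _

theorem hasSum_rpow_mul_tsum (hp : 1 < p) (hrp : r + 1 < p)
    (hφ : ∀ n : ℕ, 0 < n → |φ n| ≤ C * (n : ℝ) ^ (-p)) :
    HasSum (fun k : ℕ => ((k : ℝ) + 1) ^ r * ∑' j : ℕ, φ ((k + 1) * (j + 1)))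
      (∑' n : ℕ, rsigma r (n + 1) * φ (n + 1)) := by
  have h_summable := summable_rpow_mul_apply_mul hp hrp hφ
  rw [(hasSum_rsigma_mul hp hrp hφ).tsum_eq]
  have h_rows := h_summable.hasSum.prod_fiberwise fun k => (h_summable.prod_factor k).hasSum
  refine (hasSum_pnat_iff_hasSum_succ (f := fun k => (k : ℝ) ^ r * ∑' j : ℕ, φ (k * (j + 1)))).1
    (h_rows.congr_fun fun k => ?_) |>.congr_fun fun k => by push_cast; rfl
  rw [← tsum_mul_left]
  exact (tsum_pnat_eq_tsum_succ (f := fun j => ((k : ℕ) : ℝ) ^ r * φ (k * j))).symm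

end DivisorResummation

theorem exp_neg_le_factorial_div_pow {u : ℝ} (hu : 0 < u) (k : ℕ) :
    Real.exp (-u) ≤ k.factorial / u ^ k := by
  rw [Real.exp_neg, ← one_div, div_le_div_iff₀ (Real.exp_pos u) (by positivity), one_mul,
    ← div_le_iff₀' (by positivity)]
  exact Real.pow_div_factorial_le_exp u hu.le k

/-- The Planck function `1 / (e ^ u - 1)` with its pole `1 / u` at the origin removed: what remains
of the geometric sum of Lévy kernels once its divergent part is split off. -/
noncomputable def planckRemainder (u : ℝ) : ℝ := 1 / (Real.exp u - 1) - 1 / u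

section Coth

theorem ofReal_mul_I_mem_integerComplement {w : ℝ} (hw : w ≠ 0) :
    (w * I : ℂ) ∈ integerComplement := by
  rintro ⟨n, hn⟩
  simpa [hw.symm] using congrArg Complex.im hn

theorem cot_pi_mul_mul_I (w : ℝ) :
    Complex.cot (π * (w * I)) =
      -I * ((Real.exp (2 * π * w) + 1) / (Real.exp (2 * π * w) - 1) : ℝ) := by
  have h_arg : (2 * π * I * (w * I) : ℂ) = -((2 * π * w : ℝ) : ℂ) := by
    push_cast
    linear_combination (2 * π * w) * I_sq
  rw [cot_pi_eq_exp_ratio, h_arg, Complex.exp_neg, ← ofReal_exp]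
  set E : ℂ := (Real.exp (2 * π * w) : ℂ) with hE
  have hE_ne : E ≠ 0 := ofReal_ne_zero.2 (Real.exp_pos _).ne'
  calc (E⁻¹ + 1) / (I * (1 - E⁻¹))
      = (E * (E⁻¹ + 1)) / (E * (I * (1 - E⁻¹))) := (mul_div_mul_left _ _ hE_ne).symm
    _ = (E + 1) / (I * (E - 1)) := by
        rw [mul_add, mul_left_comm, mul_sub, mul_inv_cancel₀ hE_ne, mul_one, add_comm]
    _ = -I * ((E + 1) / (E - 1)) := by rw [div_mul_eq_div_div_swap, div_I]; ring
    _ = _ := by rw [hE]; norm_cast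

theorem coth_pi_mul_eq_tsum {w : ℝ} (hw : w ≠ 0) :
    π * ((Real.exp (2 * π * w) + 1) / (Real.exp (2 * π * w) - 1)) =
      1 / w + 2 * ∑' j : ℕ, w / (w ^ 2 + ((j : ℝ) + 1) ^ 2) := by
  have h_term (j : ℕ) : (1 / (w * I - (j + 1)) + 1 / (w * I + (j + 1)) : ℂ) =
      -2 * I * ((w / (w ^ 2 + ((j : ℝ) + 1) ^ 2) : ℝ) : ℂ) := by
    have h_prod : (w * I - (j + 1)) * (w * I + (j + 1)) = -((w : ℂ) ^ 2 + ((j : ℂ) + 1) ^ 2) := by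
      linear_combination (w : ℂ) ^ 2 * I_sq
    have h_pos : 0 < w ^ 2 + ((j : ℝ) + 1) ^ 2 := by positivity
    have h_ne : (w * I - (j + 1)) * (w * I + (j + 1)) ≠ (0 : ℂ) := by
      rw [h_prod, neg_ne_zero]
      exact_mod_cast h_pos.ne'
    rw [one_div_add_one_div (left_ne_zero_of_mul h_ne) (right_ne_zero_of_mul h_ne), h_prod,
      div_neg]
    push_cast
    ring
  have h_cot := cot_series_rep' (ofReal_mul_I_mem_integerComplement hw)
  simp_rw [h_term] at h_cot
  rw [tsum_mul_left, ← ofReal_tsum, cot_pi_mul_mul_I] at h_cot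
  have h_inv : 1 / (w * I : ℂ) = -I * (1 / w) := by
    rw [one_div, mul_inv, inv_I]; ring
  rw [h_inv] at h_cot
  refine ofReal_injective (mul_left_cancel₀ (neg_ne_zero.2 I_ne_zero) ?_)
  push_cast at h_cot ⊢
  linear_combination h_cot

theorem planckRemainder_two_pi_mul {w : ℝ} (hw : w ≠ 0) :
    planckRemainder (2 * π * w) =
      -(1 / 2) + 1 / π * ∑' j : ℕ, w / (w ^ 2 + ((j : ℝ) + 1) ^ 2) := by
  have h_ne : Real.exp (2 * π * w) - 1 ≠ 0 := by
    rw [sub_ne_zero, Ne, Real.exp_eq_one_iff]; positivity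
  have h_coth := coth_pi_mul_eq_tsum hw
  set S := ∑' j : ℕ, w / (w ^ 2 + ((j : ℝ) + 1) ^ 2)
  have hS : S = (π * ((Real.exp (2 * π * w) + 1) / (Real.exp (2 * π * w) - 1)) - 1 / w) / 2 := by
    linarith
  rw [hS, planckRemainder]
  field_simp
  ring

end Coth

theorem abs_planckRemainder_le_one {u : ℝ} (hu : 0 < u) : |planckRemainder u| ≤ 1 := by
  have h_lower : u ≤ Real.exp u - 1 := by linarith [Real.add_one_le_exp u]
  have h_upper : Real.exp u - 1 ≤ u * Real.exp u := by
    have := Real.add_one_le_exp (-u)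
    rw [Real.exp_neg, ← one_div, le_div_iff₀ (Real.exp_pos u)] at this
    linarith
  have h_pos : 0 < Real.exp u - 1 := hu.trans_le h_lower
  rw [planckRemainder, div_sub_div _ _ h_pos.ne' hu.ne', abs_le, le_div_iff₀ (by positivity),
    div_le_iff₀ (by positivity)]
  constructor <;> nlinarith

section SumIntegral

open MeasureTheory

variable {E : Type*} [NormedAddCommGroup E] [NormedSpace ℝ E] [CompleteSpace E] {f f' : ℝ → E}

theorem norm_smul_right_sub_integral_le {a b : ℝ} (hab : a ≤ b)
    (hf : ContinuousOn f (Set.Icc a b)) (hf' : ∀ y ∈ Set.Ioo a b, HasDerivAt f (f' y) y)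
    (h_integrable : IntervalIntegrable f' volume a b) :
    ‖(b - a) • f b - ∫ y in a..b, f y‖ ≤ (b - a) * ∫ y in a..b, ‖f' y‖ := by
  have h_increment : ∀ y ∈ Set.Icc a b, ‖f b - f y‖ ≤ ∫ u in a..b, ‖f' u‖ := fun y hy => by
    have h_int : IntervalIntegrable f' volume y b :=
      h_integrable.mono_set (Set.uIcc_subset_uIcc_right (Set.Icc_subset_uIcc hy))
    rw [← intervalIntegral.integral_eq_sub_of_hasDerivAt_of_le hy.2
      (hf.mono (Set.Icc_subset_Icc_left hy.1))
      (fun u hu => hf' u (Set.Ioo_subset_Ioo_left hy.1 hu)) h_int]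
    exact (intervalIntegral.norm_integral_le_integral_norm hy.2).trans
      (intervalIntegral.integral_mono_interval hy.1 hy.2 le_rfl
        (.of_forall fun _ => norm_nonneg _) h_integrable.norm)
  have h_eq : (b - a) • f b - ∫ y in a..b, f y = ∫ y in a..b, (f b - f y) := by
    rw [intervalIntegral.integral_sub intervalIntegrable_const (hf.intervalIntegrable_of_Icc hab),
      intervalIntegral.integral_const]
  rw [h_eq, mul_comm, ← abs_of_nonneg (sub_nonneg.2 hab)]
  refine intervalIntegral.norm_integral_le_of_norm_le_const fun y hy => h_increment y ?_
  rw [Set.uIoc_of_le hab] at hy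
  exact Set.Ioc_subset_Icc_self hy

theorem norm_sum_succ_sub_integral_le (N : ℕ)
    (hf : ContinuousOn f (Set.Icc 0 N)) (hf' : ∀ y ∈ Set.Ioo (0 : ℝ) N, HasDerivAt f (f' y) y)
    (h_integrable : IntervalIntegrable f' volume 0 N) :
    ‖∑ m ∈ range N, f (m + 1) - ∫ y in (0 : ℝ)..N, f y‖ ≤ ∫ y in (0 : ℝ)..N, ‖f' y‖ := by
  have h_sub {m : ℕ} (hm : m < N) : Set.Icc (m : ℝ) (m + 1 : ℕ) ⊆ Set.Icc 0 N :=
    Set.Icc_subset_Icc m.cast_nonneg (by exact_mod_cast hm)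
  have h_le (m : ℕ) : (m : ℝ) ≤ (m + 1 : ℕ) := by push_cast; linarith
  have h_int {m : ℕ} (hm : m < N) : IntervalIntegrable f' volume (m : ℝ) (m + 1 : ℕ) :=
    h_integrable.mono_set (by
      simpa only [Set.uIcc_of_le (h_le m), Set.uIcc_of_le N.cast_nonneg] using h_sub hm)
  have h_split : ∫ y in (0 : ℝ)..N, f y = ∑ m ∈ range N, ∫ y in (m : ℝ)..(m + 1 : ℕ), f y := by
    rw [← Nat.cast_zero, intervalIntegral.sum_integral_adjacent_intervals fun m hm =>
      (hf.mono (h_sub hm)).intervalIntegrable_of_Icc (h_le m)]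
  have h_split' : ∫ y in (0 : ℝ)..N, ‖f' y‖ =
      ∑ m ∈ range N, ∫ y in (m : ℝ)..(m + 1 : ℕ), ‖f' y‖ := by
    rw [← Nat.cast_zero,
      intervalIntegral.sum_integral_adjacent_intervals fun m hm => (h_int hm).norm]
  rw [h_split, h_split', ← sum_sub_distrib]
  refine norm_sum_le_of_le _ fun m hm => ?_
  rw [mem_range] at hm
  have h_unit := norm_smul_right_sub_integral_le (h_le m) (hf.mono (h_sub hm))
    (fun y hy => hf' y ⟨m.cast_nonneg.trans_lt hy.1, hy.2.trans_le (by exact_mod_cast hm)⟩)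
    (h_int hm)
  simpa using h_unit

end SumIntegral

section ZetaContinuation

open MeasureTheory Filter Topology

/-- The `n`-th term of the series `ζ(s) (s - 1) = s + ∑ₙ zetaTerm n s`, valid for `0 < re s`: it is
`s - 1` times the error in replacing `(n + 2) ^ (-s)` by `∫ y ^ (-s)` over `[n + 1, n + 2]`, with
the integral evaluated. -/
noncomputable def zetaTerm (n : ℕ) (s : ℂ) : ℂ :=
  (s - 1) * ((n + 2 : ℕ) : ℂ) ^ (-s) + (((n + 2 : ℕ) : ℂ) ^ (1 - s) - ((n + 1 : ℕ) : ℂ) ^ (1 - s))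

theorem hasDerivAt_ofReal_cpow_of_pos (c : ℂ) {y : ℝ} (hy : 0 < y) :
    HasDerivAt (fun y : ℝ => (y : ℂ) ^ c) (c * (y : ℂ) ^ (c - 1)) y := by
  simpa using
    ((hasDerivAt_id (y : ℂ)).cpow_const (c := c) (ofReal_mem_slitPlane.2 hy)).comp_ofReal

theorem zetaTerm_eq_sub_integral (n : ℕ) (s : ℂ) :
    zetaTerm n s = (s - 1) * (((n + 2 : ℕ) : ℂ) ^ (-s) -
      ∫ y in ((n + 1 : ℕ) : ℝ)..(n + 2 : ℕ), (y : ℂ) ^ (-s)) := by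
  rcases eq_or_ne s 1 with rfl | hs
  · simp [zetaTerm]
  have h_notMem : (0 : ℝ) ∉ Set.uIcc ((n + 1 : ℕ) : ℝ) (n + 2 : ℕ) :=
    Set.notMem_uIcc_of_lt (by positivity) (by positivity)
  have h_ne : 1 - s ≠ 0 := sub_ne_zero.2 hs.symm
  rw [integral_cpow (Or.inr ⟨fun h => hs (neg_injective h), h_notMem⟩), zetaTerm,
    neg_add_eq_sub]
  push_cast
  field_simp
  ring

theorem norm_cpow_sub_integral_cpow_le {a : ℝ} (ha : 0 < a) {s : ℂ} (hs : 0 < s.re) :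
    ‖((a + 1 : ℝ) : ℂ) ^ (-s) - ∫ y in a..(a + 1), (y : ℂ) ^ (-s)‖ ≤
      ‖s‖ * a ^ (-(s.re + 1)) := by
  have h_le : a ≤ a + 1 := by linarith
  have h_pos {y : ℝ} (hy : a ≤ y) : 0 < y := ha.trans_le hy
  have h_deriv_int : IntervalIntegrable (fun y : ℝ => -s * (y : ℂ) ^ (-s - 1)) volume a (a + 1) :=
    ContinuousOn.intervalIntegrable_of_Icc h_le fun y hy =>
      ((hasDerivAt_ofReal_cpow_of_pos (-s - 1)
        (h_pos hy.1)).continuousAt.const_mul _).continuousWithinAt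
  have h_error := norm_smul_right_sub_integral_le h_le
    (fun y hy => (hasDerivAt_ofReal_cpow_of_pos (-s) (h_pos hy.1)).continuousAt.continuousWithinAt)
    (fun y hy => hasDerivAt_ofReal_cpow_of_pos (-s) (h_pos hy.1.le)) h_deriv_int
  rw [add_sub_cancel_left, one_smul, one_mul] at h_error
  have h_bound := intervalIntegral.integral_mono_on h_le h_deriv_int.norm intervalIntegrable_const
    (g := fun _ => ‖s‖ * a ^ (-(s.re + 1))) fun y hy => by
      rw [norm_mul, norm_neg, norm_cpow_eq_rpow_re_of_pos (h_pos hy.1), sub_re, neg_re, one_re,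
        ← neg_add']
      exact mul_le_mul_of_nonneg_left (Real.rpow_le_rpow_of_nonpos ha hy.1 (by linarith))
        (norm_nonneg s)
  rw [intervalIntegral.integral_const, add_sub_cancel_left, one_smul] at h_bound
  exact h_error.trans h_bound

theorem norm_zetaTerm_le (n : ℕ) {s : ℂ} (hs : 0 < s.re) :
    ‖zetaTerm n s‖ ≤ ‖s - 1‖ * (‖s‖ * ((n + 1 : ℕ) : ℝ) ^ (-(s.re + 1))) := by
  have h_error := norm_cpow_sub_integral_cpow_le (Nat.cast_pos.2 n.succ_pos) hs
  rw [← Nat.cast_succ, ofReal_natCast] at h_error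
  rw [zetaTerm_eq_sub_integral, norm_mul]
  exact mul_le_mul_of_nonneg_left h_error (norm_nonneg _)

theorem summable_nat_succ_rpow {t : ℝ} (ht : t < -1) :
    Summable fun n : ℕ => ((n + 1 : ℕ) : ℝ) ^ t :=
  (summable_nat_add_iff (f := fun n : ℕ => (n : ℝ) ^ t) 1).2 (Real.summable_nat_rpow.2 ht)

theorem tendsto_sub_one_mul_sum_cpow {s : ℂ} (hs : 0 < s.re) :
    Tendsto (fun N : ℕ => (s - 1) * ∑ m ∈ range N, ((m + 1 : ℕ) : ℂ) ^ (-s) + (N : ℂ) ^ (1 - s))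
      atTop (𝓝 (s + ∑' n, zetaTerm n s)) := by
  have h_summable : Summable fun n => zetaTerm n s :=
    .of_norm_bounded (((summable_nat_succ_rpow (by linarith)).mul_left _).mul_left _)
      fun n => norm_zetaTerm_le n hs
  refine (tendsto_add_atTop_iff_nat 1).1
    ((h_summable.hasSum.tendsto_sum_nat.const_add s).congr fun N => ?_)
  have h_telescope := sum_range_sub (fun n : ℕ => ((n + 1 : ℕ) : ℂ) ^ (1 - s)) N
  simp only [zetaTerm, sum_add_distrib, ← mul_sum]
  rw [h_telescope, sum_range_succ' _ N]
  simp only [zero_add, Nat.cast_one, one_cpow]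
  ring

theorem sub_one_mul_riemannZeta_of_one_lt_re {s : ℂ} (hs : 1 < s.re) :
    (s - 1) * riemannZeta s = s + ∑' n, zetaTerm n s := by
  have h_summable : Summable fun n : ℕ => ((n + 1 : ℕ) : ℂ) ^ (-s) :=
    ((summable_nat_add_iff (f := fun n : ℕ => 1 / (n : ℂ) ^ s) 1).2
      (summable_one_div_nat_cpow.2 hs)).congr fun n => by
      rw [cpow_neg, one_div]
  have h_sum := h_summable.hasSum.tendsto_sum_nat
  have h_power : Tendsto (fun N : ℕ => (N : ℂ) ^ (1 - s)) atTop (𝓝 0) := by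
    rw [tendsto_zero_iff_norm_tendsto_zero]
    refine ((tendsto_rpow_neg_atTop (sub_pos.2 hs)).comp tendsto_natCast_atTop_atTop).congr' ?_
    filter_upwards [eventually_gt_atTop 0] with N hN
    simp [norm_natCast_cpow_of_pos hN]
  have h_zeta : riemannZeta s = ∑' n : ℕ, ((n + 1 : ℕ) : ℂ) ^ (-s) := by
    rw [zeta_eq_tsum_one_div_nat_add_one_cpow hs]
    simp_rw [cpow_neg, one_div, Nat.cast_add_one]
  rw [h_zeta]
  refine tendsto_nhds_unique ?_ (tendsto_sub_one_mul_sum_cpow (by linarith))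
  simpa using (h_sum.const_mul (s - 1)).add h_power

theorem isOpen_re_pos : IsOpen {z : ℂ | 0 < z.re} := isOpen_lt continuous_const continuous_re

theorem isPreconnected_re_pos : IsPreconnected {z : ℂ | 0 < z.re} :=
  (convex_halfSpace_re_gt 0).isPreconnected

theorem differentiable_zetaTerm (n : ℕ) : Differentiable ℂ (zetaTerm n) := by
  have h_pow (k : ℕ) {f : ℂ → ℂ} (hf : Differentiable ℂ f) :
      Differentiable ℂ fun s => ((k + 1 : ℕ) : ℂ) ^ f s :=
    hf.const_cpow (Or.inl (Nat.cast_ne_zero.2 k.succ_ne_zero))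
  exact ((differentiable_id.sub_const 1).mul (h_pow (n + 1) differentiable_id.neg)).add
    ((h_pow (n + 1) (differentiable_id.const_sub 1)).sub (h_pow n (differentiable_id.const_sub 1)))

theorem differentiableOn_tsum_zetaTerm :
    DifferentiableOn ℂ (fun s => ∑' n, zetaTerm n s) {s | 0 < s.re} := by
  intro s₀ hs₀
  set δ := s₀.re / 2
  set R := ‖s₀‖ + 1
  have hδ : 0 < δ := half_pos hs₀
  set U := {s : ℂ | δ < s.re} ∩ Metric.ball 0 R
  have hU : IsOpen U := (isOpen_lt continuous_const continuous_re).inter Metric.isOpen_ball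
  have h_mem : s₀ ∈ U := ⟨half_lt_self (a := s₀.re) hs₀, by simp [R]⟩
  have h_bound (n : ℕ) (s : ℂ) (hs : s ∈ U) :
      ‖zetaTerm n s‖ ≤ (R + 1) * (R * ((n + 1 : ℕ) : ℝ) ^ (-(δ + 1))) := by
    have h_norm : ‖s‖ ≤ R := (mem_ball_zero_iff.1 hs.2).le
    have h_norm' : ‖s - 1‖ ≤ R + 1 := (norm_sub_le _ _).trans (by simpa using h_norm)
    refine (norm_zetaTerm_le n (hδ.trans hs.1)).trans ?_
    gcongr
    · exact_mod_cast n.succ_pos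
    · exact hs.1.le
  exact ((differentiableOn_tsum_of_summable_norm
    (((summable_nat_succ_rpow (by linarith)).mul_left _).mul_left _)
    (fun n => (differentiable_zetaTerm n).differentiableOn) hU h_bound).differentiableAt
      (hU.mem_nhds h_mem)).differentiableWithinAt

theorem sub_one_mul_riemannZeta {s : ℂ} (hs : 0 < s.re) (hs1 : s ≠ 1) :
    (s - 1) * riemannZeta s = s + ∑' n, zetaTerm n s := by
  have h_zeta₁ {s : ℂ} (hs1 : s ≠ 1) : riemannZeta₁ s = (s - 1) * riemannZeta s := by
    rw [riemannZeta_eq_inv_sub_mul hs1, mul_inv_cancel_left₀ (sub_ne_zero.2 hs1)]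
  have h_near_two : riemannZeta₁ =ᶠ[𝓝 2] fun s => s + ∑' n, zetaTerm n s := by
    filter_upwards [(isOpen_lt continuous_const continuous_re).mem_nhds
      (show (1 : ℝ) < (2 : ℂ).re by norm_num)] with s hs
    rw [h_zeta₁ (by rintro rfl; exact lt_irrefl _ hs), sub_one_mul_riemannZeta_of_one_lt_re hs]
  rw [← h_zeta₁ hs1]
  exact (differentiable_riemannZeta₁.differentiableOn.analyticOnNhd
    isOpen_re_pos).eqOn_of_preconnected_of_eventuallyEq
      ((differentiableOn_id.add differentiableOn_tsum_zetaTerm).analyticOnNhd isOpen_re_pos)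
      isPreconnected_re_pos (by simp) h_near_two hs

theorem tendsto_sum_cpow_sub_cpow_div {s : ℂ} (hs : 0 < s.re) (hs1 : s ≠ 1) :
    Tendsto (fun N : ℕ => ∑ m ∈ range N, ((m + 1 : ℕ) : ℂ) ^ (-s) - (N : ℂ) ^ (1 - s) / (1 - s))
      atTop (𝓝 (riemannZeta s)) := by
  have h_ne : s - 1 ≠ 0 := sub_ne_zero.2 hs1
  have h_ne' : 1 - s ≠ 0 := sub_ne_zero.2 hs1.symm
  have h_lim := tendsto_sub_one_mul_sum_cpow hs
  rw [← sub_one_mul_riemannZeta hs hs1] at h_lim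
  refine (mul_div_cancel_left₀ (riemannZeta s) h_ne ▸ h_lim.div_const (s - 1)).congr fun N => ?_
  field_simp
  ring

theorem ofReal_re_riemannZeta (s : ℝ) : ((riemannZeta s).re : ℂ) = riemannZeta s := by
  rw [← conj_eq_iff_re, ← riemannZeta_conj, conj_ofReal]

theorem tendsto_sum_rpow_sub_rpow_div {s : ℝ} (hs : 0 < s) (hs1 : s ≠ 1) :
    Tendsto (fun N : ℕ => ∑ m ∈ range N, ((m : ℝ) + 1) ^ (-s) - (N : ℝ) ^ (1 - s) / (1 - s))
      atTop (𝓝 (riemannZeta s).re) := by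
  refine ((continuous_re.tendsto _).comp
    (tendsto_sum_cpow_sub_cpow_div (s := s) hs (mod_cast hs1))).congr fun N => ?_
  rw [Function.comp_apply, ← ofReal_re (_ - _)]
  push_cast [ofReal_cpow (Nat.cast_nonneg _), ofReal_cpow (Nat.cast_add_one_pos _).le]
  rfl

theorem riemannZeta_eq_tsum_rpow {s : ℝ} (hs : 1 < s) :
    riemannZeta s = (∑' n : ℕ, ((n : ℝ) + 1) ^ (-s) : ℝ) := by
  rw [zeta_eq_tsum_one_div_nat_add_one_cpow (by simpa using hs), ofReal_tsum]
  refine tsum_congr fun n => ?_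
  rw [ofReal_cpow (by positivity), ofReal_neg, cpow_neg, one_div]
  push_cast
  rfl

theorem riemannZeta_neg_half : riemannZeta (-1 / 2) = -(1 / (4 * π)) * riemannZeta (3 / 2) := by
  have h_Gamma : Real.Gamma (3 / 2) = √π / 2 := by
    rw [show (3 / 2 : ℝ) = 1 / 2 + 1 by norm_num, Real.Gamma_add_one (by norm_num),
      Real.Gamma_one_half_eq]
    ring
  have h_cos : Real.cos (π * (3 / 2) / 2) = -(√2 / 2) := by
    rw [show π * (3 / 2) / 2 = π - π / 4 by ring, Real.cos_pi_sub, Real.cos_pi_div_four]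
  have h_pow : (2 * π) ^ (-(3 / 2) : ℝ) = (2 * π * (√2 * √π))⁻¹ := by
    rw [Real.rpow_neg (by positivity), show (3 / 2 : ℝ) = 1 + 1 / 2 by norm_num,
      Real.rpow_add (by positivity), Real.rpow_one, ← Real.sqrt_eq_rpow, Real.sqrt_mul zero_le_two]
  have h_const : 2 * (2 * π) ^ (-(3 / 2) : ℝ) * Real.Gamma (3 / 2) * Real.cos (π * (3 / 2) / 2) =
      -(1 / (4 * π)) := by
    rw [h_Gamma, h_cos, h_pow]
    field_simp
    norm_num
  have h_func := riemannZeta_one_sub (s := (3 / 2 : ℝ))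
    (fun n hn => by
      have h_re := congrArg re hn
      norm_num at h_re
      linarith [n.cast_nonneg (α := ℝ)]) (by norm_num)
  rw [Complex.Gamma_ofReal] at h_func
  rw [show (-1 / 2 : ℂ) = 1 - (3 / 2 : ℝ) by norm_num, h_func,
    show (3 / 2 : ℂ) = (3 / 2 : ℝ) by norm_num]
  congr 1
  have h_const' := congrArg ofReal h_const
  push_cast [ofReal_cpow (show 0 ≤ 2 * π by positivity)] at h_const' ⊢
  exact h_const'

end ZetaContinuation

section LaplaceIntegral

open MeasureTheory Filter Topology

/-- The Laplace transform `z ↦ ∫₀^∞ h(y) e^{-zy} dy`, used on the half-plane `0 ≤ Re z`, where it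
converges as soon as `h` is integrable on `(0, ∞)`. -/
noncomputable def laplaceIntegral (h : ℝ → ℂ) (z : ℂ) : ℂ :=
  ∫ y in Set.Ioi (0 : ℝ), h y * cexp (-(z * y))

variable {h : ℝ → ℂ}

theorem norm_mul_cexp_neg_mul_le {z w : ℂ} {y : ℝ} (hy : 0 < y) (hz : 0 ≤ z.re) :
    ‖w * cexp (-(z * y))‖ ≤ ‖w‖ := by
  rw [norm_mul, norm_exp]
  refine mul_le_of_le_one_right (norm_nonneg _) (Real.exp_le_one_iff.2 ?_)
  rw [neg_re, re_mul_ofReal]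
  exact neg_nonpos.2 (mul_nonneg hz hy.le)

theorem aestronglyMeasurable_mul_cexp_neg_mul {μ : Measure ℝ} (hh : AEStronglyMeasurable h μ)
    (z : ℂ) : AEStronglyMeasurable (fun y : ℝ => h y * cexp (-(z * y))) μ :=
  hh.mul (by fun_prop : Continuous fun y : ℝ => cexp (-(z * y))).aestronglyMeasurable

theorem integrableOn_mul_cexp_neg_mul (hh : IntegrableOn h (Set.Ioi 0)) {z : ℂ} (hz : 0 ≤ z.re) :
    IntegrableOn (fun y : ℝ => h y * cexp (-(z * y))) (Set.Ioi 0) :=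
  Integrable.mono hh (aestronglyMeasurable_mul_cexp_neg_mul hh.aestronglyMeasurable z)
    ((ae_restrict_iff' measurableSet_Ioi).2
      (.of_forall fun _ hy => norm_mul_cexp_neg_mul_le hy hz))

theorem continuousOn_laplaceIntegral (hh : IntegrableOn h (Set.Ioi 0)) :
    ContinuousOn (laplaceIntegral h) {z | 0 ≤ z.re} :=
  continuousOn_of_dominated
    (fun z _ => aestronglyMeasurable_mul_cexp_neg_mul hh.aestronglyMeasurable z)
    (fun _ hz => (ae_restrict_iff' measurableSet_Ioi).2
      (.of_forall fun _ hy => norm_mul_cexp_neg_mul_le hy hz))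
    hh.norm (.of_forall fun _ => by fun_prop)

theorem norm_neg_mul_cexp_neg_mul_le {z w : ℂ} {y δ : ℝ} (hδ : 0 < δ) (hy : 0 < y)
    (hz : δ ≤ z.re) : ‖-(y * w) * cexp (-(z * y))‖ ≤ δ⁻¹ * ‖w‖ := by
  have h_exp : y * Real.exp (-(δ * y)) ≤ δ⁻¹ := by
    rw [Real.exp_neg, ← div_eq_mul_inv, div_le_iff₀ (Real.exp_pos _), inv_mul_eq_div,
      le_div_iff₀ hδ]
    linarith [Real.add_one_le_exp (δ * y)]
  rw [norm_mul, norm_neg, norm_mul, norm_exp, norm_real, Real.norm_of_nonneg hy.le, neg_re,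
    re_mul_ofReal]
  calc y * ‖w‖ * Real.exp (-(z.re * y)) ≤ y * ‖w‖ * Real.exp (-(δ * y)) := by gcongr
    _ = y * Real.exp (-(δ * y)) * ‖w‖ := by ring
    _ ≤ δ⁻¹ * ‖w‖ := by gcongr

theorem hasDerivAt_laplaceIntegral (hh : IntegrableOn h (Set.Ioi 0)) {z : ℂ} (hz : 0 < z.re) :
    HasDerivAt (laplaceIntegral h) (laplaceIntegral (fun y => -(y * h y)) z) z := by
  have h_nhds : {w : ℂ | z.re / 2 < w.re} ∈ 𝓝 z :=
    (isOpen_lt continuous_const continuous_re).mem_nhds (half_lt_self hz)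
  refine (hasDerivAt_integral_of_dominated_loc_of_deriv_le (𝕜 := ℂ)
    (bound := fun y => (z.re / 2)⁻¹ * ‖h y‖) h_nhds
    (.of_forall fun w => aestronglyMeasurable_mul_cexp_neg_mul hh.aestronglyMeasurable w)
    (integrableOn_mul_cexp_neg_mul hh hz.le)
    (aestronglyMeasurable_mul_cexp_neg_mul
      ((continuous_ofReal.aestronglyMeasurable.mul hh.aestronglyMeasurable).neg) z)
    ((ae_restrict_iff' measurableSet_Ioi).2 (.of_forall fun y hy w hw =>
      norm_neg_mul_cexp_neg_mul_le (half_pos hz) hy (le_of_lt hw)))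
    (hh.norm.const_mul _) (.of_forall fun y w _ => ?_)).2
  have h_exponent : HasDerivAt (fun w : ℂ => -(w * y)) (-(1 * (y : ℂ))) w :=
    ((hasDerivAt_id w).mul_const (y : ℂ)).neg
  exact (h_exponent.cexp.const_mul (h y)).congr_deriv (by ring)

theorem integral_div_sq_smul_comp_div {E : Type*} [NormedAddCommGroup E] [NormedSpace ℝ E]
    (g : ℝ → E) {c : ℝ} (hc : 0 < c) :
    ∫ u in Set.Ioi 0, (c / u ^ 2) • g (c / u) = ∫ y in Set.Ioi 0, g y := by
  have h_inv := integral_comp_rpow_Ioi (fun y => g (c * y)) (p := -1) (by norm_num)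
  rw [integral_comp_mul_left_Ioi g 0 hc, mul_zero, ← smul_right_inj hc.ne', smul_inv_smul₀ hc.ne',
    ← integral_smul] at h_inv
  rw [← h_inv]
  refine setIntegral_congr_fun measurableSet_Ioi fun u (hu : 0 < u) => ?_
  rw [smul_smul, Real.rpow_neg_one, ← div_eq_mul_inv, show (-1 - 1 : ℝ) = -(2 : ℕ) by norm_num,
    Real.rpow_neg hu.le, Real.rpow_natCast, abs_neg, abs_one, one_mul, div_eq_mul_inv]

end LaplaceIntegral

section LevyKernel

open MeasureTheory Filter Topology

/-- Up to a constant factor the density `e^{-A/y} y^{-3/2}` of the Lévy distribution, whose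
Fourier transform is a damped exponential of `√w`. The square root makes it vanish for `y ≤ 0`. -/
noncomputable def levyKernel (A y : ℝ) : ℝ := Real.exp (-(A / y)) / (y * √y)

variable {A : ℝ} {y : ℝ}

theorem levyKernel_of_nonpos (hy : y ≤ 0) : levyKernel A y = 0 := by
  rw [levyKernel, Real.sqrt_eq_zero_of_nonpos hy, mul_zero, div_zero]

theorem levyKernel_nonneg : 0 ≤ levyKernel A y := by
  rcases le_total y 0 with hy | hy
  · exact (levyKernel_of_nonpos hy).ge
  · rw [levyKernel]
    positivity

theorem mul_levyKernel (hy : 0 < y) : y * levyKernel A y = Real.exp (-(A / y)) / √y := by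
  rw [levyKernel]
  field_simp

theorem levyKernel_le_sqrt (hA : 0 < A) : levyKernel A y ≤ 2 / A ^ 2 * √y := by
  rcases le_or_gt y 0 with hy | hy
  · rw [levyKernel_of_nonpos hy]
    positivity
  · have h_exp := exp_neg_le_factorial_div_pow (div_pos hA hy) 2
    rw [levyKernel, div_le_iff₀ (by positivity)]
    refine h_exp.trans_eq ?_
    rw [show 2 / A ^ 2 * √y * (y * √y) = 2 / A ^ 2 * y * (√y * √y) by ring,
      Real.mul_self_sqrt hy.le, Nat.factorial_two]
    field_simp
    norm_num

theorem continuous_levyKernel (hA : 0 < A) : Continuous (levyKernel A) := by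
  refine continuous_iff_continuousAt.2 fun y => ?_
  rcases lt_trichotomy y 0 with hy | rfl | hy
  · refine (continuousAt_const (y := (0 : ℝ))).congr ?_
    filter_upwards [gt_mem_nhds hy] with z hz using (levyKernel_of_nonpos hz.le).symm
  · rw [ContinuousAt, levyKernel_of_nonpos le_rfl]
    refine squeeze_zero (fun _ => levyKernel_nonneg) (fun _ => levyKernel_le_sqrt hA) ?_
    have h_sqrt : Continuous fun z : ℝ => 2 / A ^ 2 * √z := by fun_prop
    simpa only [Real.sqrt_zero, mul_zero] using h_sqrt.tendsto 0
  · have h_ne : y * √y ≠ 0 := by positivity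
    exact ContinuousAt.div (by fun_prop (disch := exact hy.ne')) (by fun_prop) h_ne

theorem rpow_neg_three_halves (hy : 0 < y) : y ^ (-(3 / 2) : ℝ) = (y * √y)⁻¹ := by
  rw [Real.rpow_neg hy.le, Real.sqrt_eq_rpow, show (3 / 2 : ℝ) = 1 + 1 / 2 by norm_num,
    Real.rpow_add hy, Real.rpow_one]

theorem levyKernel_le_rpow (hA : 0 ≤ A) (hy : 0 < y) :
    levyKernel A y ≤ y ^ (-(3 / 2) : ℝ) := by
  rw [rpow_neg_three_halves hy, levyKernel, div_eq_mul_inv]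
  refine mul_le_of_le_one_left (by positivity) (Real.exp_le_one_iff.2 (neg_nonpos.2 ?_))
  positivity

theorem summable_succ_rpow_neg_three_halves :
    Summable fun m : ℕ => ((m : ℝ) + 1) ^ (-(3 / 2) : ℝ) := by
  simpa only [Nat.cast_succ] using summable_nat_succ_rpow (t := -(3 / 2)) (by norm_num)

theorem summable_levyKernel (hA : 0 ≤ A) : Summable fun m : ℕ => levyKernel A (m + 1) :=
  .of_nonneg_of_le (fun _ => levyKernel_nonneg) (fun m => levyKernel_le_rpow hA (by positivity))
    summable_succ_rpow_neg_three_halves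

theorem levyKernel_eq_inversion (hy : 0 < y) :
    levyKernel A y = (|(-1 : ℝ)| * y ^ (-1 - 1 : ℝ)) •
      ((y ^ (-1 : ℝ)) ^ (1 / 2 - 1 : ℝ) * Real.exp (-(A * y ^ (-1 : ℝ)))) := by
  rw [abs_neg, abs_one, one_mul, smul_eq_mul, ← Real.rpow_mul hy.le, ← mul_assoc,
    ← Real.rpow_add hy, Real.rpow_neg_one, ← div_eq_mul_inv,
    show (-1 - 1 + -1 * (1 / 2 - 1) : ℝ) = -(3 / 2) by norm_num, rpow_neg_three_halves hy,
    levyKernel, inv_mul_eq_div]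

theorem integrableOn_levyKernel (hA : 0 < A) : IntegrableOn (levyKernel A) (Set.Ioi 0) := by
  have h_gamma : IntegrableOn (fun u : ℝ => u ^ (1 / 2 - 1 : ℝ) * Real.exp (-(A * u)))
      (Set.Ioi 0) := by
    simpa only [Real.rpow_one, neg_mul] using integrableOn_rpow_mul_exp_neg_mul_rpow (p := 1)
      (s := 1 / 2 - 1) (by norm_num) zero_lt_one hA
  refine ((integrableOn_Ioi_comp_rpow_iff _ (p := -1) (by norm_num)).2 h_gamma).congr_fun
    (fun y hy => (levyKernel_eq_inversion hy).symm) measurableSet_Ioi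

theorem integral_levyKernel (hA : 0 < A) : ∫ y in Set.Ioi 0, levyKernel A y = √(π / A) := by
  rw [setIntegral_congr_fun measurableSet_Ioi fun y hy => levyKernel_eq_inversion hy,
    integral_comp_rpow_Ioi (fun u : ℝ => u ^ (1 / 2 - 1 : ℝ) * Real.exp (-(A * u))) (by norm_num),
    Real.integral_rpow_mul_exp_neg_mul_Ioi (by norm_num) hA, Real.Gamma_one_half_eq,
    ← Real.sqrt_eq_rpow, ← Real.sqrt_mul (by positivity), one_div_mul_eq_div]

theorem integrableOn_ofReal_levyKernel (hA : 0 < A) :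
    IntegrableOn (fun y => (levyKernel A y : ℂ)) (Set.Ioi 0) :=
  (integrableOn_levyKernel hA).ofReal

theorem laplaceIntegral_levyKernel_zero (hA : 0 < A) :
    laplaceIntegral (fun y => (levyKernel A y : ℂ)) 0 = √(π / A) := by
  simp only [laplaceIntegral, zero_mul, neg_zero, Complex.exp_zero, mul_one]
  rw [integral_complex_ofReal, integral_levyKernel hA]

-- The substitution `y ↦ A / (t y)` preserves the exponent `A / y + t y`.
theorem laplaceIntegral_neg_mul_levyKernel (hA : 0 < A) {t : ℝ} (ht : 0 < t) :
    laplaceIntegral (fun y => -(y * (levyKernel A y : ℂ))) t =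
      -(√(A / t) * laplaceIntegral (fun y => (levyKernel A y : ℂ)) t) := by
  rw [laplaceIntegral, laplaceIntegral, ← integral_const_mul, ← integral_neg,
    ← integral_div_sq_smul_comp_div _ (div_pos hA ht)]
  refine setIntegral_congr_fun measurableSet_Ioi fun u (hu : 0 < u) => ?_
  have h_real : A / t / u ^ 2 * ((A / t / u * levyKernel A (A / t / u)) *
      Real.exp (-(t * (A / t / u)))) = √(A / t) * (levyKernel A u * Real.exp (-(t * u))) := by
    have h_swap : A / (A / t / u) = t * u := by field_simp
    have h_swap' : t * (A / t / u) = A / u := by field_simp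
    rw [mul_levyKernel (by positivity), levyKernel, h_swap, h_swap',
      Real.sqrt_div (by positivity) u]
    calc A / t / u ^ 2 * (Real.exp (-(t * u)) / (√(A / t) / √u) * Real.exp (-(A / u)))
        = A / t / √(A / t) * (√u / u / u * (Real.exp (-(t * u)) * Real.exp (-(A / u)))) := by
          field_simp
      _ = √(A / t) * (Real.exp (-(A / u)) / (u * √u) * Real.exp (-(t * u))) := by
          rw [Real.div_sqrt, Real.sqrt_div_self]
          field_simp
  have h_complex := congrArg (fun a : ℝ => -(a : ℂ)) h_real
  push_cast at h_complex
  rw [real_smul, ← h_complex]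
  push_cast
  ring

end LevyKernel

section LevyLaplace

open MeasureTheory Filter Topology

theorem eqOn_re_pos_of_forall_ofReal {E : Type*} [NormedAddCommGroup E] [NormedSpace ℂ E]
    [CompleteSpace E] {f g : ℂ → E} (hf : DifferentiableOn ℂ f {z | 0 < z.re})
    (hg : DifferentiableOn ℂ g {z | 0 < z.re}) (hfg : ∀ t : ℝ, 0 < t → f t = g t) :
    Set.EqOn f g {z | 0 < z.re} := by
  refine (hf.analyticOnNhd isOpen_re_pos).eqOn_of_preconnected_of_frequently_eq
    (hg.analyticOnNhd isOpen_re_pos) isPreconnected_re_pos (z₀ := ((1 : ℝ) : ℂ)) ?_ ?_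
  · exact (zero_lt_one : (0 : ℝ) < 1)
  · have h_tendsto : Tendsto ((↑) : ℝ → ℂ) (𝓝[≠] 1) (𝓝[≠] ((1 : ℝ) : ℂ)) :=
      continuous_ofReal.continuousWithinAt.tendsto_nhdsWithin
        fun _ ht => ofReal_injective.ne ht
    refine h_tendsto.frequently (Eventually.frequently ?_)
    filter_upwards [nhdsWithin_le_nhds (lt_mem_nhds zero_lt_one)] with t ht using hfg t ht

variable {A : ℝ}

theorem differentiableOn_laplaceIntegral {h : ℝ → ℂ} (hh : IntegrableOn h (Set.Ioi 0)) :
    DifferentiableOn ℂ (laplaceIntegral h) {z | 0 < z.re} := fun _ hz =>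
  (hasDerivAt_laplaceIntegral hh hz).differentiableAt.differentiableWithinAt

theorem hasDerivAt_laplaceIntegral_levyKernel (hA : 0 < A) {z : ℂ} (hz : 0 < z.re) :
    HasDerivAt (laplaceIntegral fun y => (levyKernel A y : ℂ))
      (-(√A * z ^ (-1 / 2 : ℂ) * laplaceIntegral (fun y => (levyKernel A y : ℂ)) z)) z := by
  have h_int := integrableOn_ofReal_levyKernel hA
  have h_diff := differentiableOn_laplaceIntegral h_int
  have h_deriv := fun (w : ℂ) (hw : 0 < w.re) => (hasDerivAt_laplaceIntegral h_int hw).deriv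
  have h_eq := eqOn_re_pos_of_forall_ofReal (h_diff.deriv isOpen_re_pos)
    (g := fun w => -(√A * w ^ (-1 / 2 : ℂ) * laplaceIntegral (fun y => (levyKernel A y : ℂ)) w))
    ?_ fun t ht => ?_
  · exact (hasDerivAt_laplaceIntegral h_int hz).congr_deriv ((h_deriv z hz).symm.trans (h_eq hz))
  · refine .neg (.mul (.const_mul (fun w hw => ?_) _) h_diff)
    exact (differentiableAt_id.cpow_const (.inl hw)).differentiableWithinAt
  · rw [h_deriv t ht, laplaceIntegral_neg_mul_levyKernel hA ht, Real.sqrt_div hA.le,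
      show (-1 / 2 : ℂ) = ((-(1 / 2) : ℝ) : ℂ) by norm_num, ← ofReal_cpow ht.le,
      Real.rpow_neg ht.le, ← Real.sqrt_eq_rpow, ← ofReal_mul, div_eq_mul_inv]

theorem laplaceIntegral_levyKernel_of_re_pos (hA : 0 < A) {z w : ℂ} (hz : 0 < z.re)
    (hw : 0 < w.re) :
    laplaceIntegral (fun y => (levyKernel A y : ℂ)) z * cexp (2 * √A * sqrt z) =
      laplaceIntegral (fun y => (levyKernel A y : ℂ)) w * cexp (2 * √A * sqrt w) := by
  have h_deriv (u : ℂ) (hu : 0 < u.re) : HasDerivAt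
      (fun u => laplaceIntegral (fun y => (levyKernel A y : ℂ)) u *
        cexp (2 * √A * sqrt u)) 0 u := by
    have h_exp := ((hasDerivAt_sqrt (.inl hu)).const_mul (2 * (√A : ℂ))).cexp
    exact ((hasDerivAt_laplaceIntegral_levyKernel hA hu).mul h_exp).congr_deriv (by ring)
  exact isOpen_re_pos.is_const_of_deriv_eq_zero isPreconnected_re_pos
    (fun u hu => (h_deriv u hu).differentiableAt.differentiableWithinAt)
    (fun u hu => (h_deriv u hu).deriv) hz hw

theorem laplaceIntegral_levyKernel (hA : 0 < A) {z : ℂ} (hz : 0 ≤ z.re) :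
    laplaceIntegral (fun y => (levyKernel A y : ℂ)) z = √(π / A) * cexp (-(2 * √A * sqrt z)) := by
  set G : ℂ → ℂ := fun u => laplaceIntegral (fun y => (levyKernel A y : ℂ)) u *
    cexp (2 * √A * sqrt u)
  have h_cont : ContinuousOn G {u | 0 ≤ u.re} := by
    refine (continuousOn_laplaceIntegral (integrableOn_ofReal_levyKernel hA)).mul fun u hu => ?_
    have h_sqrt := continuousAt_sqrt (.inl hu)
    exact (h_sqrt.const_mul _).cexp.continuousWithinAt
  have h_const : Set.EqOn G (fun _ => G 1) {u | 0 ≤ u.re} := by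
    refine Set.EqOn.of_subset_closure (s := {u : ℂ | 0 < u.re})
      (fun u hu => laplaceIntegral_levyKernel_of_re_pos hA hu (by simp)) h_cont continuousOn_const
      (fun u (hu : 0 < u.re) => hu.le) ?_
    rw [closure_setOfPred_lt_re]
  have h_zero : G 0 = √(π / A) := by
    simp only [G, sqrt_zero, mul_zero, Complex.exp_zero, mul_one,
      laplaceIntegral_levyKernel_zero hA]
  rw [← h_zero, h_const (by simp : (0 : ℂ) ∈ {u : ℂ | 0 ≤ u.re}), ← h_const hz, mul_assoc,
    ← Complex.exp_add, add_neg_cancel, Complex.exp_zero, mul_one]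

end LevyLaplace

section Poisson

open MeasureTheory Filter Topology FourierTransform

/-- The function `e^{-u} cos u`, the real part of `e^{-(1 ± i)u}`: the shape of the Fourier
transform of `levyKernel` and of the terms of the series to be summed. -/
noncomputable def dampedCos (u : ℝ) : ℝ := Real.exp (-u) * Real.cos u

theorem dampedCos_zero : dampedCos 0 = 1 := by
  rw [dampedCos, neg_zero, Real.exp_zero, Real.cos_zero, mul_one]

theorem abs_dampedCos_le (u : ℝ) : |dampedCos u| ≤ Real.exp (-u) := by
  rw [dampedCos, abs_mul, Real.abs_exp]
  exact mul_le_of_le_one_right (Real.exp_pos _).le (Real.abs_cos_le_one u)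

theorem exp_neg_mul_sqrt_le {c t : ℝ} (hc : 0 < c) (ht : 0 < t) :
    Real.exp (-(c * √t)) ≤ 24 / c ^ 4 * t ^ (-2 : ℝ) := by
  refine (exp_neg_le_factorial_div_pow (mul_pos hc (Real.sqrt_pos.2 ht)) 4).trans_eq ?_
  rw [mul_pow, show √t ^ 4 = (√t ^ 2) ^ 2 by ring, Real.sq_sqrt ht.le,
    show (-2 : ℝ) = -(2 : ℕ) by norm_num, Real.rpow_neg ht.le, Real.rpow_natCast,
    show (Nat.factorial 4 : ℝ) = 24 by norm_num [Nat.factorial]]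
  field_simp

theorem summable_exp_neg_mul_sqrt {c : ℝ} (hc : 0 < c) :
    Summable fun n : ℕ => Real.exp (-(c * √(n + 1))) := by
  refine .of_nonneg_of_le (fun _ => (Real.exp_pos _).le)
    (fun n => exp_neg_mul_sqrt_le hc (by positivity)) (.mul_left _ ?_)
  simpa only [Nat.cast_succ] using summable_nat_succ_rpow (t := -2) (by norm_num)

theorem fourier_eq_laplaceIntegral {f : ℝ → ℂ} (hf : ∀ y ≤ 0, f y = 0) (w : ℝ) :
    𝓕 f w = laplaceIntegral f ((2 * π * w : ℝ) * I) := by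
  rw [Real.fourier_real_eq_integral_exp_smul, laplaceIntegral,
    ← integral_indicator measurableSet_Ioi]
  refine integral_congr_ae (.of_forall fun y => ?_)
  beta_reduce
  rcases le_or_gt y 0 with hy | hy
  · rw [Set.indicator_of_notMem (Set.notMem_Ioi.2 hy), hf y hy, smul_zero]
  · rw [Set.indicator_of_mem (Set.mem_Ioi.2 hy), smul_eq_mul, mul_comm]
    congr 2
    push_cast
    ring

theorem sqrt_ofReal_mul_I (w : ℝ) :
    sqrt (w * I) = √(|w| / 2) * (1 + (if 0 ≤ w then 1 else -1 : ℝ) * I) := by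
  rw [sqrt_eq_real_add_ite, re_ofReal_mul, im_ofReal_mul, I_re, I_im, norm_mul, norm_I,
    norm_real, Real.norm_eq_abs, mul_zero, mul_one, mul_one, add_zero, sub_zero]
  split_ifs <;> push_cast <;> ring

variable {A : ℝ}

theorem fourier_levyKernel (hA : 0 < A) (w : ℝ) :
    𝓕 (fun y => (levyKernel A y : ℂ)) w = √(π / A) *
      cexp (-((2 * √(π * A * |w|) : ℝ) * (1 + (if 0 ≤ w then 1 else -1 : ℝ) * I))) := by
  have h_sign : 0 ≤ 2 * π * w ↔ 0 ≤ w := mul_nonneg_iff_of_pos_left Real.two_pi_pos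
  have h_sqrt : √(π * A * |w|) = √A * √(|2 * π * w| / 2) := by
    rw [← Real.sqrt_mul hA.le, abs_mul, abs_of_pos Real.two_pi_pos]
    congr 1
    ring
  rw [fourier_eq_laplaceIntegral fun y hy => by rw [levyKernel_of_nonpos hy, ofReal_zero],
    laplaceIntegral_levyKernel hA (by rw [re_ofReal_mul, I_re, mul_zero]), sqrt_ofReal_mul_I,
    h_sqrt]
  simp only [h_sign]
  push_cast
  ring_nf

theorem norm_fourier_levyKernel (hA : 0 < A) (w : ℝ) :
    ‖𝓕 (fun y => (levyKernel A y : ℂ)) w‖ = √(π / A) * Real.exp (-(2 * √(π * A * |w|))) := by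
  rw [fourier_levyKernel hA, norm_mul, norm_exp, norm_real,
    Real.norm_of_nonneg (Real.sqrt_nonneg _), neg_re, re_ofReal_mul, add_re, one_re,
    re_ofReal_mul, I_re, mul_zero, add_zero, mul_one]

theorem re_fourier_levyKernel (hA : 0 < A) (w : ℝ) :
    (𝓕 (fun y => (levyKernel A y : ℂ)) w).re = √(π / A) * dampedCos (2 * √(π * A * |w|)) := by
  rw [fourier_levyKernel hA, re_ofReal_mul, exp_re, dampedCos]
  split_ifs <;> simp

theorem summable_fourier_levyKernel (hA : 0 < A) :
    Summable fun n : ℤ => 𝓕 (fun y => (levyKernel A y : ℂ)) n := by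
  have h_summable : Summable fun n : ℕ =>
      √(π / A) * Real.exp (-(2 * √(π * A * |(n : ℝ) + 1|))) := by
    refine ((summable_exp_neg_mul_sqrt (c := 2 * √(π * A)) (by positivity)).mul_left
      √(π / A)).congr fun n => ?_
    rw [abs_of_pos (by positivity), Real.sqrt_mul (mul_pos Real.pi_pos hA).le, mul_assoc]
  refine .of_norm (.of_add_one_of_neg_add_one ?_ ?_) <;> refine h_summable.congr fun n => ?_ <;>
    rw [norm_fourier_levyKernel hA] <;> push_cast
  · rfl
  · rw [abs_neg]

theorem isBigO_levyKernel (hA : 0 ≤ A) (l : Filter ℝ) :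
    (fun y => (levyKernel A y : ℂ)) =O[l] fun y => |y| ^ (-(3 / 2) : ℝ) := by
  refine .of_bound 1 (.of_forall fun y => ?_)
  rw [norm_real, one_mul, Real.norm_of_nonneg levyKernel_nonneg,
    Real.norm_of_nonneg (by positivity)]
  rcases le_or_gt y 0 with hy | hy
  · rw [levyKernel_of_nonpos hy]
    positivity
  · rw [abs_of_pos hy]
    exact levyKernel_le_rpow hA hy

theorem tsum_int_levyKernel : ∑' n : ℤ, levyKernel A n = ∑' m : ℕ, levyKernel A (m + 1) := by
  have h_inj : Function.Injective fun m : ℕ => (m : ℤ) + 1 := fun m n h => by simpa using h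
  rw [← h_inj.tsum_eq (f := fun n : ℤ => levyKernel A n)]
  · simp only [Int.cast_add, Int.cast_natCast, Int.cast_one]
  · refine Function.support_subset_iff'.2 fun n hn => levyKernel_of_nonpos ?_
    by_contra! h_pos
    have h_pos' : 0 < n := by exact_mod_cast h_pos
    exact hn ⟨(n - 1).toNat, by simp only; lia⟩

theorem tsum_levyKernel (hA : 0 < A) :
    ∑' m : ℕ, levyKernel A (m + 1) =
      √(π / A) * (1 + 2 * ∑' n : ℕ, dampedCos (2 * √(π * A) * √(n + 1))) := by
  have h_summable := summable_fourier_levyKernel hA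
  have h_poisson := congrArg re (Real.tsum_eq_tsum_fourier_of_rpow_decay_of_summable
    (f := fun y => (levyKernel A y : ℂ)) (continuous_ofReal.comp (continuous_levyKernel hA))
    (by norm_num) (isBigO_levyKernel hA.le _)
    h_summable 0)
  have h_re_summable := (hasSum_re h_summable.hasSum).summable
  simp only [zero_add, QuotientAddGroup.mk_zero, fourier_eval_zero, mul_one] at h_poisson
  rw [← ofReal_tsum, ofReal_re, tsum_int_levyKernel, re_tsum h_summable] at h_poisson
  simp only [re_fourier_levyKernel hA] at h_poisson h_re_summable
  rw [h_poisson, tsum_int_eq_zero_add_two_mul_tsum_pnat (fun n => by simp) h_re_summable]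
  simp only [Int.cast_natCast, Nat.abs_cast, Int.cast_zero, abs_zero, mul_zero, Real.sqrt_zero]
  rw [tsum_pnat_eq_tsum_succ (f := fun n : ℕ => √(π / A) * dampedCos (2 * √(π * A * n))),
    tsum_mul_left, dampedCos_zero]
  simp only [Real.sqrt_mul (mul_pos Real.pi_pos hA).le, Nat.cast_succ, ← mul_assoc]
  rw [nsmul_eq_mul]
  ring

end Poisson

section LevyAsymptotics

open MeasureTheory Filter Topology

variable {A : ℝ} {y : ℝ}

theorem hasDerivAt_levyKernel (hy : 0 < y) :
    HasDerivAt (levyKernel A) ((A / y ^ 2 - 3 / (2 * y)) * levyKernel A y) y := by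
  have h_exponent : HasDerivAt (fun u : ℝ => -(A / u)) (-((0 * y - A * 1) / y ^ 2)) y :=
    ((hasDerivAt_const y A).div (hasDerivAt_id y) hy.ne').neg
  have h_den := (hasDerivAt_id y).mul (Real.hasDerivAt_sqrt hy.ne')
  refine (h_exponent.exp.div h_den (by simp only [Pi.mul_apply, id]; positivity)).congr_deriv ?_
  simp only [Pi.mul_apply, id, levyKernel]
  field_simp
  rw [Real.sq_sqrt hy.le]
  ring

theorem hasDerivAt_mul_levyKernel (hy : 0 < y) :
    HasDerivAt (fun u => u * levyKernel A u) ((A / y - 1 / 2) * levyKernel A y) y := by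
  refine ((hasDerivAt_id y).mul (hasDerivAt_levyKernel hy)).congr_deriv ?_
  simp only [id]
  field_simp
  ring

theorem hasDerivAt_two_mul_sq_mul_levyKernel (hy : 0 < y) :
    HasDerivAt (fun u => 2 * u ^ 2 * levyKernel A u)
      (y * levyKernel A y + 2 * A * levyKernel A y) y := by
  refine (((hasDerivAt_pow 2 y).const_mul 2).mul (hasDerivAt_levyKernel hy)).congr_deriv ?_
  field_simp
  ring

theorem integral_mul_levyKernel (hA : 0 < A) {b : ℝ} (hb : 0 ≤ b) :
    ∫ y in (0 : ℝ)..b, y * levyKernel A y =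
      2 * b ^ 2 * levyKernel A b - 2 * A * ∫ y in (0 : ℝ)..b, levyKernel A y := by
  have h_cont := continuous_levyKernel hA
  have h_ftc := intervalIntegral.integral_eq_sub_of_hasDerivAt_of_le hb
    (f := fun u => 2 * u ^ 2 * levyKernel A u) (by fun_prop)
    (fun y hy => hasDerivAt_two_mul_sq_mul_levyKernel hy.1)
    (Continuous.intervalIntegrable (by fun_prop) _ _)
  rw [intervalIntegral.integral_add (Continuous.intervalIntegrable (by fun_prop) _ _)
    (Continuous.intervalIntegrable (by fun_prop) _ _), intervalIntegral.integral_const_mul,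
    levyKernel_of_nonpos le_rfl, mul_zero, sub_zero] at h_ftc
  exact eq_sub_of_add_eq h_ftc

theorem abs_sub_half_mul_levyKernel_le (hA : 0 < A) (hy : 0 ≤ y) :
    |(A / y - 1 / 2) * levyKernel A y| ≤ 2 * levyKernel (A / 2) y := by
  have h_u : 0 ≤ A / y := by positivity
  have h_exp : |A / y - 1 / 2| * Real.exp (-(A / y)) ≤ 2 * Real.exp (-(A / 2 / y)) := by
    have h_abs : |A / y - 1 / 2| ≤ 2 * Real.exp (A / 2 / y) := by
      rw [div_right_comm, abs_le]
      constructor <;> linarith [Real.add_one_le_exp (A / y / 2)]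
    calc |A / y - 1 / 2| * Real.exp (-(A / y))
        ≤ 2 * Real.exp (A / 2 / y) * Real.exp (-(A / y)) := by gcongr
      _ = 2 * Real.exp (-(A / 2 / y)) := by
        rw [mul_assoc, ← Real.exp_add]
        ring_nf
  rw [abs_mul, abs_of_nonneg levyKernel_nonneg, levyKernel, levyKernel,
    mul_div_assoc', mul_div_assoc']
  gcongr

theorem abs_sum_mul_levyKernel_sub_integral_le (hA : 0 < A) (N : ℕ) :
    |∑ m ∈ range N, ((m : ℝ) + 1) * levyKernel A (m + 1) - ∫ y in (0 : ℝ)..N, y * levyKernel A y| ≤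
      2 * √(π / (A / 2)) := by
  have h_cont := continuous_levyKernel hA
  have h_cont' := continuous_levyKernel (half_pos hA)
  have h_bound : ∀ y ∈ Set.Icc (0 : ℝ) N,
      ‖(A / y - 1 / 2) * levyKernel A y‖ ≤ 2 * levyKernel (A / 2) y :=
    fun y hy => abs_sub_half_mul_levyKernel_le hA hy.1
  have h_int : IntervalIntegrable (fun y => 2 * levyKernel (A / 2) y) volume 0 N :=
    Continuous.intervalIntegrable (by fun_prop) _ _
  have h_int' : IntervalIntegrable (fun y => (A / y - 1 / 2) * levyKernel A y) volume 0 N := by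
    refine h_int.mono_fun (by fun_prop) ((ae_restrict_iff' measurableSet_uIoc).2 (.of_forall ?_))
    intro y hy
    rw [Set.uIoc_of_le N.cast_nonneg] at hy
    exact (h_bound y (Set.Ioc_subset_Icc_self hy)).trans (le_abs_self _)
  calc _ ≤ ∫ y in (0 : ℝ)..N, ‖(A / y - 1 / 2) * levyKernel A y‖ :=
        norm_sum_succ_sub_integral_le (f := fun y => y * levyKernel A y) N
          (by fun_prop) (fun y hy => hasDerivAt_mul_levyKernel hy.1) h_int'
    _ ≤ ∫ y in (0 : ℝ)..N, 2 * levyKernel (A / 2) y :=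
        intervalIntegral.integral_mono_on N.cast_nonneg h_int'.norm h_int h_bound
    _ = 2 * ∫ y in Set.Ioc (0 : ℝ) N, levyKernel (A / 2) y := by
        rw [intervalIntegral.integral_const_mul, intervalIntegral.integral_of_le N.cast_nonneg]
    _ ≤ 2 * ∫ y in Set.Ioi (0 : ℝ), levyKernel (A / 2) y := by
        refine mul_le_mul_of_nonneg_left ?_ zero_le_two
        exact setIntegral_mono_set (integrableOn_levyKernel (half_pos hA))
          (.of_forall fun _ => levyKernel_nonneg) Set.Ioc_subset_Ioi_self.eventuallyLE
    _ = 2 * √(π / (A / 2)) := by rw [integral_levyKernel (half_pos hA)]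

theorem one_sub_exp_neg_div_div_sqrt_le (hy : 0 < y) :
    (1 - Real.exp (-(A / y))) / √y ≤ A * y ^ (-(3 / 2) : ℝ) := by
  calc (1 - Real.exp (-(A / y))) / √y ≤ A / y / √y := by
        gcongr
        linarith [Real.one_sub_le_exp_neg (A / y)]
    _ = A * y ^ (-(3 / 2) : ℝ) := by rw [rpow_neg_three_halves hy, div_div, div_eq_mul_inv]

theorem one_sub_exp_neg_div_div_sqrt_nonneg (hA : 0 ≤ A) (hy : 0 ≤ y) :
    0 ≤ (1 - Real.exp (-(A / y))) / √y :=
  div_nonneg (sub_nonneg.2 (Real.exp_le_one_iff.2 (neg_nonpos.2 (div_nonneg hA hy))))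
    (Real.sqrt_nonneg _)

theorem summable_one_sub_exp_neg_div_div_sqrt (hA : 0 ≤ A) :
    Summable fun m : ℕ => (1 - Real.exp (-(A / (m + 1)))) / √(m + 1) :=
  .of_nonneg_of_le (fun m => one_sub_exp_neg_div_div_sqrt_nonneg hA (by positivity))
    (fun m => one_sub_exp_neg_div_div_sqrt_le (by positivity))
    (.mul_left _ summable_succ_rpow_neg_three_halves)

theorem tendsto_mul_one_sub_exp_neg_div_div_sqrt (hA : 0 ≤ A) :
    Tendsto (fun N : ℕ => N * ((1 - Real.exp (-(A / N))) / √N)) atTop (𝓝 0) := by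
  have h_majorant : Tendsto (fun N : ℕ => A * (√N)⁻¹) atTop (𝓝 0) := by
    simpa using (Real.tendsto_sqrt_atTop.comp
      tendsto_natCast_atTop_atTop).inv_tendsto_atTop.const_mul A
  refine squeeze_zero' (.of_forall fun N => mul_nonneg N.cast_nonneg
    (one_sub_exp_neg_div_div_sqrt_nonneg hA N.cast_nonneg)) ?_ h_majorant
  filter_upwards [eventually_gt_atTop 0] with N hN
  have hN' : (0 : ℝ) < N := Nat.cast_pos.2 hN
  calc N * ((1 - Real.exp (-(A / N))) / √N) ≤ N * (A * (N : ℝ) ^ (-(3 / 2) : ℝ)) := by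
        gcongr
        exact one_sub_exp_neg_div_div_sqrt_le hN'
    _ = A * (√N)⁻¹ := by
        rw [rpow_neg_three_halves hN']
        field_simp

theorem sum_one_sub_exp_neg_div_div_sqrt (hA : 0 < A) (N : ℕ) :
    ∑ m ∈ range N, (1 - Real.exp (-(A / (m + 1)))) / √(m + 1) =
      (∑ m ∈ range N, ((m : ℝ) + 1) ^ (-(1 / 2) : ℝ) - (N : ℝ) ^ (1 - 1 / 2 : ℝ) / (1 - 1 / 2)) +
        2 * A * (∫ y in (0 : ℝ)..N, levyKernel A y) +
        2 * (N * ((1 - Real.exp (-(A / N))) / √N)) -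
        (∑ m ∈ range N, ((m : ℝ) + 1) * levyKernel A (m + 1) -
          ∫ y in (0 : ℝ)..N, y * levyKernel A y) := by
  have h_term (m : ℕ) : (1 - Real.exp (-(A / (m + 1)))) / √(m + 1) =
      ((m : ℝ) + 1) ^ (-(1 / 2) : ℝ) - ((m : ℝ) + 1) * levyKernel A (m + 1) := by
    rw [mul_levyKernel (by positivity), sub_div, Real.rpow_neg (by positivity),
      ← Real.sqrt_eq_rpow, one_div]
  have h_sqrt : (N : ℝ) ^ (1 - 1 / 2 : ℝ) = √N := by
    rw [Real.sqrt_eq_rpow]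
    norm_num
  have h_end : N * ((1 - Real.exp (-(A / N))) / √N) = √N - (N : ℝ) ^ 2 * levyKernel A N := by
    rcases N.eq_zero_or_pos with rfl | hN
    · simp
    · rw [sq, mul_assoc, mul_levyKernel (Nat.cast_pos.2 hN), sub_div, mul_sub, mul_one_div,
        Real.div_sqrt]
  simp only [h_term, sum_sub_distrib]
  rw [integral_mul_levyKernel hA N.cast_nonneg, h_sqrt, h_end]
  ring

theorem abs_tsum_one_sub_exp_neg_div_div_sqrt_sub_le (hA : 0 < A) :
    |∑' m : ℕ, (1 - Real.exp (-(A / (m + 1)))) / √(m + 1) - 2 * √(π * A) -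
      (riemannZeta (1 / 2)).re| ≤ 2 * √(π / (A / 2)) := by
  have h_zeta := tendsto_sum_rpow_sub_rpow_div (s := 1 / 2) (by norm_num) (by norm_num)
  have h_integral := (intervalIntegral_tendsto_integral_Ioi 0 (integrableOn_levyKernel hA)
    tendsto_natCast_atTop_atTop).const_mul (2 * A)
  have h_end := (tendsto_mul_one_sub_exp_neg_div_div_sqrt hA.le).const_mul 2
  have h_sum := (summable_one_sub_exp_neg_div_div_sqrt hA.le).hasSum.tendsto_sum_nat
  have h_sqrt : 2 * A * √(π / A) = 2 * √(π * A) := by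
    rw [Real.sqrt_div' _ hA.le, Real.sqrt_mul' _ hA.le]
    field_simp
    rw [Real.sq_sqrt hA.le]
  rw [integral_levyKernel hA, h_sqrt] at h_integral
  have h_lim := ((h_sum.sub h_integral).sub h_zeta).sub h_end
  rw [mul_zero, sub_zero, show ((1 / 2 : ℝ) : ℂ) = 1 / 2 by norm_num] at h_lim
  refine le_of_tendsto' h_lim.abs fun N => ?_
  rw [sum_one_sub_exp_neg_div_div_sqrt hA]
  refine le_of_eq_of_le ?_ (abs_sum_mul_levyKernel_sub_integral_le hA N)
  rw [← abs_neg]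
  ring_nf

theorem tendsto_tsum_one_sub_exp_neg_div_div_sqrt :
    Tendsto (fun A : ℝ => ∑' m : ℕ, (1 - Real.exp (-(A / (m + 1)))) / √(m + 1) - 2 * √(π * A))
      atTop (𝓝 (riemannZeta (1 / 2)).re) := by
  refine tendsto_sub_nhds_zero_iff.1 (squeeze_zero_norm' ?_ (a := fun A => 2 * √(π / (A / 2))) ?_)
  · filter_upwards [eventually_gt_atTop 0] with A hA
    exact abs_tsum_one_sub_exp_neg_div_div_sqrt_sub_le hA
  · have h_inner : Tendsto (fun A : ℝ => π / (A / 2)) atTop (𝓝 0) :=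
      tendsto_const_nhds.div_atTop (tendsto_id.atTop_div_const two_pos)
    simpa using (Real.continuous_sqrt.tendsto 0).comp h_inner |>.const_mul 2

end LevyAsymptotics

section Resummation

open Filter Topology

variable {a x y : ℝ}

theorem sum_exp_neg_mul_succ {u : ℝ} (hu : u ≠ 0) (K : ℕ) :
    ∑ k ∈ range K, Real.exp (-(u * (k + 1))) =
      (1 - Real.exp (-(u * K))) * (1 / (Real.exp u - 1)) := by
  have h_ne : Real.exp u - 1 ≠ 0 := sub_ne_zero.2 (Real.exp_eq_one_iff u |>.not.2 hu)
  have h_step (t : ℝ) : Real.exp (-(u * t)) = Real.exp u * Real.exp (-(u * (t + 1))) := by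
    rw [← Real.exp_add]
    ring_nf
  induction K with
  | zero => simp
  | succ K ih =>
    rw [sum_range_succ, ih, h_step K]
    push_cast
    field_simp
    ring

theorem sum_levyKernel_mul_succ (ha : a ≠ 0) (hy : 0 < y) (K : ℕ) :
    ∑ k ∈ range K, levyKernel (a * (k + 1)) y =
      1 / a * ((1 - Real.exp (-(a * K / y))) / √y) +
        planckRemainder (a / y) * y ^ (-(3 / 2) : ℝ) * (1 - Real.exp (-(a * K / y))) := by
  simp only [levyKernel, ← sum_div, ← div_mul_eq_mul_div a y]
  rw [sum_exp_neg_mul_succ (div_ne_zero ha hy.ne'), rpow_neg_three_halves hy, planckRemainder]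
  field_simp
  ring

theorem norm_planckRemainder_mul_rpow_mul_le (ha : 0 < a) (hy : 0 < y) {c : ℝ} (hc : 0 ≤ c) :
    ‖planckRemainder (a / y) * y ^ (-(3 / 2) : ℝ) * (1 - Real.exp (-c))‖ ≤
      y ^ (-(3 / 2) : ℝ) := by
  have h_exp : |1 - Real.exp (-c)| ≤ 1 := by
    rw [abs_of_nonneg (sub_nonneg.2 (Real.exp_le_one_iff.2 (neg_nonpos.2 hc)))]
    linarith [Real.exp_pos (-c)]
  have h_rpow : 0 ≤ y ^ (-(3 / 2) : ℝ) := by positivity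
  rw [Real.norm_eq_abs, abs_mul, abs_mul, abs_of_nonneg h_rpow]
  calc |planckRemainder (a / y)| * y ^ (-(3 / 2) : ℝ) * |1 - Real.exp (-c)|
      ≤ 1 * y ^ (-(3 / 2) : ℝ) * 1 := by
        gcongr
        exact abs_planckRemainder_le_one (div_pos ha hy)
    _ = y ^ (-(3 / 2) : ℝ) := by ring

theorem sum_tsum_levyKernel (ha : 0 < a) (K : ℕ) :
    ∑ k ∈ range K, ∑' m : ℕ, levyKernel (a * (k + 1)) (m + 1) =
      1 / a * ∑' m : ℕ, (1 - Real.exp (-(a * K / (m + 1)))) / √(m + 1) +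
        ∑' m : ℕ, planckRemainder (a / (m + 1)) * ((m : ℝ) + 1) ^ (-(3 / 2) : ℝ) *
          (1 - Real.exp (-(a * K / (m + 1)))) := by
  have h_summable : Summable fun m : ℕ =>
      planckRemainder (a / (m + 1)) * ((m : ℝ) + 1) ^ (-(3 / 2) : ℝ) *
        (1 - Real.exp (-(a * K / (m + 1)))) :=
    .of_norm_bounded summable_succ_rpow_neg_three_halves fun m =>
      norm_planckRemainder_mul_rpow_mul_le ha (by positivity) (by positivity)
  rw [← Summable.tsum_finsetSum fun k _ => summable_levyKernel (by positivity), ← tsum_mul_left,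
    ← ((summable_one_sub_exp_neg_div_div_sqrt (by positivity)).mul_left _).tsum_add h_summable]
  exact tsum_congr fun m => sum_levyKernel_mul_succ ha.ne' (by positivity) K

theorem tendsto_tsum_planckRemainder_mul (ha : 0 < a) :
    Tendsto (fun K : ℕ => ∑' m : ℕ, planckRemainder (a / (m + 1)) *
        ((m : ℝ) + 1) ^ (-(3 / 2) : ℝ) * (1 - Real.exp (-(a * K / (m + 1))))) atTop
      (𝓝 (∑' m : ℕ, planckRemainder (a / (m + 1)) * ((m : ℝ) + 1) ^ (-(3 / 2) : ℝ))) := by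
  refine tendsto_tsum_of_dominated_convergence summable_succ_rpow_neg_three_halves (fun m => ?_)
    (.of_forall fun K m =>
      norm_planckRemainder_mul_rpow_mul_le ha (by positivity) (by positivity))
  have h_arg : Tendsto (fun K : ℕ => a * K / ((m : ℝ) + 1)) atTop atTop :=
    (tendsto_natCast_atTop_atTop.const_mul_atTop ha).atTop_div_const (by positivity)
  simpa using ((Real.tendsto_exp_neg_atTop_nhds_zero.comp h_arg).const_sub 1).const_mul
    (planckRemainder (a / (m + 1)) * ((m : ℝ) + 1) ^ (-(3 / 2) : ℝ))

theorem tendsto_sum_tsum_levyKernel_sub (ha : 0 < a) :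
    Tendsto (fun K : ℕ => ∑ k ∈ range K, ∑' m : ℕ, levyKernel (a * (k + 1)) (m + 1) -
        1 / a * (2 * √(π * (a * K)))) atTop
      (𝓝 (1 / a * (riemannZeta (1 / 2)).re +
        ∑' m : ℕ, planckRemainder (a / (m + 1)) * ((m : ℝ) + 1) ^ (-(3 / 2) : ℝ))) := by
  have h_main := (tendsto_tsum_one_sub_exp_neg_div_div_sqrt.comp
    (tendsto_natCast_atTop_atTop.const_mul_atTop ha)).const_mul (1 / a)
  refine (h_main.add (tendsto_tsum_planckRemainder_mul ha)).congr fun K => ?_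
  rw [sum_tsum_levyKernel ha, Function.comp_apply]
  ring

theorem abs_one_div_sq_add_sq_le (x : ℝ) {t : ℝ} (ht : 0 < t) :
    |1 / (x ^ 2 + t ^ 2)| ≤ 1 * t ^ (-2 : ℝ) := by
  rw [abs_of_nonneg (by positivity), one_mul, Real.rpow_neg ht.le, Real.rpow_two, one_div]
  gcongr
  exact le_add_of_nonneg_left (sq_nonneg x)

theorem hasSum_succ_rpow_mul_tsum_one_div_sq_add_sq (x : ℝ) :
    HasSum (fun k : ℕ => ((k : ℝ) + 1) ^ (-(1 / 2) : ℝ) *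
        ∑' j : ℕ, 1 / (x ^ 2 + (((k : ℝ) + 1) * (j + 1)) ^ 2))
      (∑' n : ℕ, rsigma (1 / 2) (n + 1) / (√(n + 1) * (x ^ 2 + ((n : ℝ) + 1) ^ 2))) := by
  convert hasSum_rpow_mul_tsum (r := -(1 / 2)) (p := 2) (C := 1)
    (φ := fun n => 1 / (x ^ 2 + (n : ℝ) ^ 2)) (by norm_num) (by norm_num)
    (fun n hn => abs_one_div_sq_add_sq_le x (Nat.cast_pos.2 hn)) using 1
  · push_cast
    rfl
  · refine tsum_congr fun n => ?_
    rw [rsigma_neg, ← Real.sqrt_eq_rpow, mul_one_div, div_div, Nat.cast_succ]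

theorem tsum_planckRemainder_mul_rpow (hx : x ≠ 0) :
    ∑' m : ℕ, planckRemainder (2 * π * x / (m + 1)) * ((m : ℝ) + 1) ^ (-(3 / 2) : ℝ) =
      -(1 / 2) * ∑' m : ℕ, ((m : ℝ) + 1) ^ (-(3 / 2) : ℝ) +
        x / π * ∑' n : ℕ, rsigma (1 / 2) (n + 1) / (√(n + 1) * (x ^ 2 + ((n : ℝ) + 1) ^ 2)) := by
  refine HasSum.tsum_eq (((summable_succ_rpow_neg_three_halves.hasSum.mul_left _).add
    ((hasSum_succ_rpow_mul_tsum_one_div_sq_add_sq x).mul_left _)).congr_fun fun m => ?_)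
  have hm : (0 : ℝ) < m + 1 := by positivity
  have h_term (j : ℕ) : x / (m + 1) / ((x / (m + 1)) ^ 2 + ((j : ℝ) + 1) ^ 2) =
      x * (m + 1) * (1 / (x ^ 2 + (((m : ℝ) + 1) * (j + 1)) ^ 2)) := by
    field_simp
  have h_rpow : ((m : ℝ) + 1) * (m + 1) ^ (-(3 / 2) : ℝ) = (m + 1) ^ (-(1 / 2) : ℝ) := by
    rw [← Real.rpow_one_add' hm.le (by norm_num)]
    norm_num
  rw [mul_div_assoc, planckRemainder_two_pi_mul (div_ne_zero hx hm.ne')]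
  simp only [h_term]
  rw [tsum_mul_left, ← h_rpow]
  ring

end Resummation

section DampedCosineSeries

open Filter Topology

variable {x : ℝ}

theorem abs_dampedCos_sqrt_le (hx : 0 < x) (n : ℕ) (hn : 0 < n) :
    |dampedCos (2 * π * √(2 * n * x))| ≤
      24 / (2 * π * √(2 * x)) ^ 4 * (n : ℝ) ^ (-2 : ℝ) := by
  have hn' : (0 : ℝ) < n := Nat.cast_pos.2 hn
  refine (abs_dampedCos_le _).trans ?_
  rw [show 2 * n * x = 2 * x * n by ring, Real.sqrt_mul (by positivity), ← mul_assoc]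
  exact exp_neg_mul_sqrt_le (by positivity) hn'

theorem rsigma_div_sqrt_mul (n : ℕ) (t : ℝ) :
    rsigma (1 / 2) (n + 1) / √(n + 1) * t = rsigma (-(1 / 2)) (n + 1) * t := by
  rw [rsigma_neg, ← Real.sqrt_eq_rpow, Nat.cast_succ]

theorem succ_rpow_mul_tsum_dampedCos (hx : 0 < x) (k : ℕ) :
    ((k : ℝ) + 1) ^ (-(1 / 2) : ℝ) *
        ∑' j : ℕ, dampedCos (2 * π * √(2 * ((k + 1) * (j + 1)) * x)) =
      √(x / 2) * ∑' m : ℕ, levyKernel (2 * π * x * (k + 1)) (m + 1) -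
        1 / 2 * ((k : ℝ) + 1) ^ (-(1 / 2) : ℝ) := by
  have hk : (0 : ℝ) < k + 1 := by positivity
  have h_arg (j : ℕ) : 2 * √(π * (2 * π * x * (k + 1))) * √(j + 1) =
      2 * π * √(2 * ((k + 1) * (j + 1)) * x) := by
    rw [mul_assoc, ← Real.sqrt_mul (by positivity), mul_assoc 2 π √_,
      show π * (2 * π * x * (k + 1)) * (j + 1) = π ^ 2 * (2 * ((k + 1) * (j + 1)) * x) by ring,
      Real.sqrt_mul (by positivity), Real.sqrt_sq Real.pi_pos.le]
  have h_scale : √(x / 2) * √(π / (2 * π * x * (k + 1))) =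
      1 / 2 * ((k : ℝ) + 1) ^ (-(1 / 2) : ℝ) := by
    rw [← Real.sqrt_mul (by positivity), Real.rpow_neg hk.le, ← Real.sqrt_eq_rpow,
      show x / 2 * (π / (2 * π * x * (k + 1))) = (1 / 2) ^ 2 / (k + 1) by field_simp,
      Real.sqrt_div' _ hk.le, Real.sqrt_sq (by norm_num), div_eq_mul_inv]
  rw [tsum_levyKernel (by positivity), ← mul_assoc, h_scale]
  simp only [h_arg]
  ring

theorem sum_succ_rpow_mul_tsum_dampedCos (hx : 0 < x) (K : ℕ) :
    ∑ k ∈ range K, ((k : ℝ) + 1) ^ (-(1 / 2) : ℝ) *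
        ∑' j : ℕ, dampedCos (2 * π * √(2 * ((k + 1) * (j + 1)) * x)) =
      √(x / 2) * (∑ k ∈ range K, ∑' m : ℕ, levyKernel (2 * π * x * (k + 1)) (m + 1) -
          1 / (2 * π * x) * (2 * √(π * (2 * π * x * K)))) -
        1 / 2 * (∑ k ∈ range K, ((k : ℝ) + 1) ^ (-(1 / 2) : ℝ) -
          (K : ℝ) ^ (1 - 1 / 2 : ℝ) / (1 - 1 / 2)) := by
  have h_divergent : √(x / 2) * (1 / (2 * π * x) * (2 * √(π * (2 * π * x * K)))) =
      1 / 2 * ((K : ℝ) ^ (1 - 1 / 2 : ℝ) / (1 - 1 / 2)) := by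
    have h_sqrt : √(x / 2) * √(π * (2 * π * x * K)) = π * x * √K := by
      rw [← Real.sqrt_mul (by positivity),
        show x / 2 * (π * (2 * π * x * K)) = (π * x) ^ 2 * K by ring,
        Real.sqrt_mul (by positivity), Real.sqrt_sq (by positivity)]
    rw [show (1 - 1 / 2 : ℝ) = 1 / 2 by norm_num, ← Real.sqrt_eq_rpow, mul_left_comm,
      mul_left_comm √(x / 2), h_sqrt]
    field_simp
  simp only [succ_rpow_mul_tsum_dampedCos hx, sum_sub_distrib, ← mul_sum]
  linear_combination h_divergent

theorem hasSum_rsigma_mul_dampedCos_planckRemainder (hx : 0 < x) :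
    HasSum (fun n : ℕ => rsigma (1 / 2) (n + 1) / √(n + 1) * dampedCos (2 * π * √(2 * (n + 1) * x)))
      (√(x / 2) * (1 / (2 * π * x) * (riemannZeta (1 / 2)).re +
        ∑' m : ℕ, planckRemainder (2 * π * x / (m + 1)) * ((m : ℝ) + 1) ^ (-(3 / 2) : ℝ)) -
        1 / 2 * (riemannZeta (1 / 2)).re) := by
  have h_bound := abs_dampedCos_sqrt_le hx
  have h_summable := (hasSum_rsigma_mul (r := -(1 / 2)) (by norm_num) (by norm_num)
    h_bound).summable
  have h_rows := (hasSum_rpow_mul_tsum (r := -(1 / 2)) (by norm_num) (by norm_num)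
    h_bound).tendsto_sum_nat
  have h_zeta := tendsto_sum_rpow_sub_rpow_div (s := 1 / 2) (by norm_num) (by norm_num)
  rw [show ((1 / 2 : ℝ) : ℂ) = 1 / 2 by norm_num] at h_zeta
  have h_limit := ((tendsto_sum_tsum_levyKernel_sub (a := 2 * π * x) (by positivity)).const_mul
    √(x / 2)).sub (h_zeta.const_mul (1 / 2))
  push_cast at h_rows h_summable
  simp only [← sum_succ_rpow_mul_tsum_dampedCos hx] at h_limit
  simp only [rsigma_div_sqrt_mul, ← tendsto_nhds_unique h_rows h_limit]
  exact h_summable.hasSum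

end DampedCosineSeries

theorem hasSum_rsigma_mul_dampedCos {x : ℝ} (hx : 0 < x) :
    HasSum (fun n : ℕ => rsigma (1 / 2) (n + 1) / √(n + 1) * dampedCos (2 * π * √(2 * (n + 1) * x)))
      ((1 / (2 * π * √(2 * x)) - 1 / 2) * (riemannZeta (1 / 2)).re
        + π * √(2 * x) * (riemannZeta (-1 / 2)).re
        + x ^ (3 / 2 : ℝ) / (π * √2) *
          ∑' n : ℕ, rsigma (1 / 2) (n + 1) / (√(n + 1) * (x ^ 2 + ((n : ℝ) + 1) ^ 2))) := by
  convert hasSum_rsigma_mul_dampedCos_planckRemainder hx using 1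
  have h_zeta : (riemannZeta (-1 / 2)).re =
      -(1 / (4 * π)) * ∑' m : ℕ, ((m : ℝ) + 1) ^ (-(3 / 2) : ℝ) := by
    refine ofReal_injective ?_
    have h_three_halves := riemannZeta_eq_tsum_rpow (s := 3 / 2) (by norm_num)
    have h_neg_half := ofReal_re_riemannZeta (-1 / 2)
    push_cast at h_three_halves h_neg_half ⊢
    rw [h_neg_half, riemannZeta_neg_half, h_three_halves]
  have h_rpow : x ^ (3 / 2 : ℝ) = x * √x := by
    rw [Real.sqrt_eq_rpow, ← Real.rpow_one_add' hx.le (by norm_num)]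
    norm_num
  have h_sqrt_half : √(x / 2) = √(2 * x) / 2 := by
    rw [show x / 2 = 2 * x / 2 ^ 2 by ring, Real.sqrt_div' _ (by positivity),
      Real.sqrt_sq two_pos.le]
  have h_zeta_coeff : √(2 * x) / 2 * (1 / (2 * π * x)) = 1 / (2 * π * √(2 * x)) := by
    field_simp
    rw [Real.sq_sqrt (by positivity)]
  have h_series_coeff : √(2 * x) / 2 * (x / π) = x * √x / (π * √2) := by
    rw [Real.sqrt_mul two_pos.le]
    field_simp
    rw [Real.sq_sqrt two_pos.le]
  rw [tsum_planckRemainder_mul_rpow hx.ne', h_zeta, h_rpow, h_sqrt_half, ← h_zeta_coeff,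
    ← h_series_coeff]
  field_simp
  ring

theorem corollary_half_cos_general (x : ℝ) (hx : 0 < x) :
    HasSum (fun n : ℕ => ((rsigma (1 / 2) (n + 1) / Real.sqrt ((n : ℝ) + 1) *
        Real.exp (-(2 * π * Real.sqrt (2 * ((n : ℝ) + 1) * x))) *
        Real.cos (2 * π * Real.sqrt (2 * ((n : ℝ) + 1) * x)) : ℝ) : ℂ))
      (((1 / (2 * π * Real.sqrt (2 * x)) - 1 / 2 : ℝ) : ℂ) * riemannZeta (1 / 2)
      + ((π * Real.sqrt (2 * x) : ℝ) : ℂ) * riemannZeta (-1 / 2)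
      + ((x ^ (3 / 2 : ℝ) / (π * Real.sqrt 2) : ℝ) : ℂ) *
        ∑' n : ℕ, ((rsigma (1 / 2) (n + 1) /
          (Real.sqrt ((n : ℝ) + 1) * (x ^ 2 + ((n : ℝ) + 1) ^ 2)) : ℝ) : ℂ)) := by
  have h_real := hasSum_ofReal.2 (hasSum_rsigma_mul_dampedCos hx)
  have h_half := ofReal_re_riemannZeta (1 / 2)
  have h_neg_half := ofReal_re_riemannZeta (-1 / 2)
  push_cast at h_half h_neg_half
  rw [ofReal_add, ofReal_add, ofReal_mul (_ - _), h_half, ofReal_mul (π * _), h_neg_half,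
    ofReal_mul (_ / _), ofReal_tsum] at h_real
  simpa only [dampedCos, mul_assoc] using h_real

theorem corollary_half_cos (x : ℝ) (hx : 0 < x) (hxint : ∀ k : ℤ, x ≠ (k : ℝ)) :
    (∑' n : ℕ, ((rsigma (1 / 2) (n + 1) / Real.sqrt ((n : ℝ) + 1) *
        Real.exp (-(2 * π * Real.sqrt (2 * ((n : ℝ) + 1) * x))) *
        Real.cos (2 * π * Real.sqrt (2 * ((n : ℝ) + 1) * x)) : ℝ) : ℂ))
    = ((1 / (2 * π * Real.sqrt (2 * x)) - 1 / 2 : ℝ) : ℂ) * riemannZeta (1 / 2)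
      + ((π * Real.sqrt (2 * x) : ℝ) : ℂ) * riemannZeta (-1 / 2)
      + ((x ^ (3 / 2 : ℝ) / (π * Real.sqrt 2) : ℝ) : ℂ) *
        ∑' n : ℕ, ((rsigma (1 / 2) (n + 1) /
          (Real.sqrt ((n : ℝ) + 1) * (x ^ 2 + ((n : ℝ) + 1) ^ 2)) : ℝ) : ℂ) :=
  (corollary_half_cos_general x hx).tsum_eq
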